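/- For all words v, w over the digit alphabet {1,2}, with π₁ = (−2,−2,−2,0,0,1) and f₁ = (0,0,0,0,0,1), one has π₁ᵀ·Ã(v,w)·f₁ = 1 − 2·((v)₃ − (w)₃)²; consequently π₁ᵀ·Ã(v,w)·f₁ > 0 if and only if v = w, and likewise π₁ᵀ·Ã(v,w)·f₁ ≥ 0 if and only if v = w. -/

import Mathlib

/-!
`π₁` and `f₁` combine the last column of `Ã(v,w)` into `1 - 2((v)₃ - (w)₃)²`, an integer which is
`1` when `(v)₃ = (w)₃` and at most `-1` otherwise. Base-3 numerals without the digit `0` have no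
leading zeros, so their values determine them.
-/

open Matrix

/-- The base-3 value `(v)₃` of a word over the digit alphabet `{1,2}`
(`false` representing the digit `1`, `true` the digit `2`), most significant
digit first. -/
def val3 (v : List Bool) : ℕ :=
  v.foldl (fun a b => 3 * a + (if b then 2 else 1)) 0

/-- The 6×6 integer matrix `Ã(v,w)` (Hirvensalo's variant). -/
def matAt (v w : List Bool) : Matrix (Fin 6) (Fin 6) ℤ :=
  !![3^(v.length + w.length), 0, 0, -(val3 v : ℤ) * 3^w.length,
        (val3 w : ℤ) * 3^v.length, -2 * (val3 v : ℤ) * (val3 w : ℤ);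
     0, 3^(2 * w.length), 0, (val3 w : ℤ) * 3^w.length, 0, (val3 w : ℤ)^2;
     0, 0, 3^(2 * v.length), 0, -(val3 v : ℤ) * 3^v.length, (val3 v : ℤ)^2;
     0, 0, 0, 3^w.length, 0, 2 * (val3 w : ℤ);
     0, 0, 0, 0, 3^v.length, -2 * (val3 v : ℤ);
     0, 0, 0, 0, 0, 1]

/-- The starting vector `π₁`. -/
def π₁ : Fin 6 → ℤ := ![-2, -2, -2, 0, 0, 1]

/-- The ending vector `f₁`. -/
def f₁ : Fin 6 → ℤ := ![0, 0, 0, 0, 0, 1]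

theorem sub_mul_sq_nonneg_iff {a k x : ℤ} (ha : 0 ≤ a) (hak : a < k) :
    0 ≤ a - k * x ^ 2 ↔ x = 0 := by
  refine ⟨fun h => ?_, by rintro rfl; simpa using ha⟩
  by_contra hx
  have hsq : 1 ≤ x ^ 2 := Int.add_one_le_of_lt (sq_pos_of_ne_zero hx)
  nlinarith

theorem sub_mul_sq_pos_iff {a k x : ℤ} (ha : 0 < a) (hak : a < k) :
    0 < a - k * x ^ 2 ↔ x = 0 :=
  ⟨fun h => (sub_mul_sq_nonneg_iff ha.le hak).mp h.le, by rintro rfl; simpa using ha⟩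

/-- The digit in `{1,2}` that a Boolean letter of a word stands for; with it, `val3` becomes an
instance of `Nat.ofDigits`. -/
def digit (b : Bool) : ℕ := if b then 2 else 1

theorem digit_injective : Function.Injective digit := by decide

theorem digit_pos (b : Bool) : 0 < digit b := by cases b <;> decide

theorem digit_lt_three (b : Bool) : digit b < 3 := by cases b <;> decide

theorem val3_eq_ofDigits (v : List Bool) : val3 v = Nat.ofDigits 3 (v.map digit).reverse := by
  simp only [Nat.ofDigits_eq_foldr, List.foldr_reverse, List.foldl_map, val3, digit, Nat.cast_id,
    add_comm]

theorem digits_val3 (v : List Bool) : Nat.digits 3 (val3 v) = (v.map digit).reverse := by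
  have mem_digits {d : ℕ} (hd : d ∈ (v.map digit).reverse) : ∃ b, digit b = d :=
    (List.mem_map.mp (List.mem_reverse.mp hd)).imp fun _ => And.right
  rw [val3_eq_ofDigits]
  refine Nat.digits_ofDigits 3 (by norm_num) _ (fun d hd => ?_) (fun hne => ?_)
  · obtain ⟨b, rfl⟩ := mem_digits hd
    exact digit_lt_three b
  · obtain ⟨b, hb⟩ := mem_digits (List.getLast_mem hne)
    exact hb ▸ (digit_pos b).ne'

theorem val3_injective : Function.Injective val3 := by
  intro v w h
  have hdigits : (v.map digit).reverse = (w.map digit).reverse := by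
    rw [← digits_val3, ← digits_val3, h]
  exact digit_injective.list_map (List.reverse_injective hdigits)

theorem val3_sub_val3_eq_zero_iff (v w : List Bool) :
    (val3 v : ℤ) - (val3 w : ℤ) = 0 ↔ v = w := by
  rw [sub_eq_zero, Nat.cast_inj, val3_injective.eq_iff]

theorem f₁_eq_single : f₁ = Pi.single 5 1 := by decide

theorem matAt_mulVec_f₁ (v w : List Bool) :
    matAt v w *ᵥ f₁ =
      ![-2 * (val3 v : ℤ) * val3 w, (val3 w : ℤ) ^ 2, (val3 v : ℤ) ^ 2,
        2 * (val3 w : ℤ), -2 * (val3 v : ℤ), 1] := by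
  rw [f₁_eq_single, mulVec_single_one]
  ext i
  fin_cases i <;> rfl

theorem π₁_dotProduct_matAt_mulVec_f₁ (v w : List Bool) :
    π₁ ⬝ᵥ (matAt v w *ᵥ f₁) = 1 - 2 * ((val3 v : ℤ) - (val3 w : ℤ)) ^ 2 := by
  simp only [matAt_mulVec_f₁, π₁, cons_dotProduct_cons, dotProduct_of_isEmpty]
  ring

/-- `π₁ᵀ·Ã(v,w)·f₁ = 1 − 2·((v)₃ − (w)₃)²`; this is positive iff `v = w`, and
likewise nonnegative iff `v = w`. -/
theorem matAt_equality_test (v w : List Bool) :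
    π₁ ⬝ᵥ (matAt v w *ᵥ f₁) = 1 - 2 * ((val3 v : ℤ) - (val3 w : ℤ))^2 ∧
    (0 < π₁ ⬝ᵥ (matAt v w *ᵥ f₁) ↔ v = w) ∧
    (0 ≤ π₁ ⬝ᵥ (matAt v w *ᵥ f₁) ↔ v = w) := by
  rw [π₁_dotProduct_matAt_mulVec_f₁, sub_mul_sq_pos_iff one_pos one_lt_two,
    sub_mul_sq_nonneg_iff zero_le_one one_lt_two, val3_sub_val3_eq_zero_iff]
  exact ⟨rfl, Iff.rfl, Iff.rfl⟩
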